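/- arXiv:2603.04357 — 2 statements merged into one kernel-verified Lean document; each statement's English description precedes it below -/
import Mathlib

section
/- Let m, n ≥ 1. The weight enumerator of the stabilizer group S of the n×m concatenated bit- and phase-flip repetition code equals (1/2)·[ (f^e_n(x,y) + 2^(n−1)·y^n)^m + (f^e_n(x,y) − 2^(n−1)·y^n)^m ] for all real x, y, where f^e_n(x,y) = ((x+y)^n + (x−y)^n)/2. -/
/-!
A stabilizer element consists of an even-weight word `ζ` of block `Z`-values and, for each block, an
even-weight `X`-part. The monomial `x ^ (m * n - wt v) * y ^ wt v` is a product over qubits, so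
summing over the `X`-parts first turns the enumerator into a sum over even-weight `ζ` of a product
over blocks, whose factors are again sums over an even-weight code of a product over qubits. Both
sums are evaluated by the same identity: with the sign character `χ` of `ZMod 2`, the condition
`∑ i, z i = 0` has indicator `(1 + χ (∑ i, z i)) / 2`, so the sum of `∏ i, u (z i)` over even-weight
`z` of length `k` is the average of `(u 0 + u 1) ^ k` and `(u 0 - u 1) ^ k`.
-/

/-- The weight of a Pauli string on qubits indexed by `Fin m × Fin n`. -/
def wt2 {m n : ℕ} (v : Fin m × Fin n → ZMod 2 × ZMod 2) : ℕ :=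
  (Finset.univ.filter fun p => v p ≠ (0, 0)).card

/-- The weight enumerator of a finite set of Pauli strings on `Fin m × Fin n`. -/
noncomputable def enum2 {m n : ℕ} (T : Finset (Fin m × Fin n → ZMod 2 × ZMod 2))
    (x y : ℝ) : ℝ :=
  ∑ v ∈ T, x ^ (m * n - wt2 v) * y ^ wt2 v

/-- The stabilizer group of the `n × m` concatenated bit- and phase-flip repetition code:
even X-weight in each block, Z-part constant within each block, and the block Z-values
sum to zero. -/
def concatStab (m n : ℕ) : Finset (Fin m × Fin n → ZMod 2 × ZMod 2) :=
  Finset.univ.filter fun v =>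
    (∀ i, ∑ j, (v (i, j)).1 = 0) ∧
    ∃ ζ : Fin m → ZMod 2, (∀ i j, (v (i, j)).2 = ζ i) ∧ ∑ i, ζ i = 0

section EvenCode

/-- The even-weight binary code on the index set `ι`. Both the `X`-part of a block and the word of
block `Z`-values of a stabilizer element range over such a code. -/
def evenCode (ι : Type*) [Fintype ι] [DecidableEq ι] : Finset (ι → ZMod 2) :=
  Finset.univ.filter fun z => ∑ i, z i = 0

lemma mem_evenCode {ι : Type*} [Fintype ι] [DecidableEq ι] {z : ι → ZMod 2} :
    z ∈ evenCode ι ↔ ∑ i, z i = 0 := by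
  simp [evenCode]

/-- The additive character of `ZMod 2` sending `1` to `-1`, with values in an arbitrary commutative
ring; it detects membership in `evenCode`. -/
def signChar (R : Type*) [CommRing R] : AddChar (ZMod 2) R :=
  AddChar.zmodChar 2 neg_one_sq

lemma signChar_one (R : Type*) [CommRing R] : signChar R 1 = -1 := by
  simp [signChar, AddChar.zmodChar_apply, ZMod.val_one]

lemma one_add_signChar (R : Type*) [CommRing R] (s : ZMod 2) :
    1 + signChar R s = if s = 0 then 2 else 0 := by
  obtain rfl | rfl : s = 0 ∨ s = 1 := by
    revert s
    decide
  · simp [one_add_one_eq_two]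
  · simp [signChar_one]

lemma addChar_sum {ι A M : Type*} [AddCommMonoid A] [CommMonoid M] (ψ : AddChar A M)
    (s : Finset ι) (f : ι → A) : ψ (∑ i ∈ s, f i) = ∏ i ∈ s, ψ (f i) :=
  map_prod ψ.toMonoidHom (fun i => Multiplicative.ofAdd (f i)) s

variable {ι : Type*} [Fintype ι] [DecidableEq ι]

lemma two_mul_sum_evenCode {R : Type*} [CommRing R] (F : (ι → ZMod 2) → R) :
    2 * ∑ z ∈ evenCode ι, F z = ∑ z, F z + ∑ z, (∏ i, signChar R (z i)) * F z := by
  rw [evenCode, Finset.sum_filter, Finset.mul_sum, ← Finset.sum_add_distrib]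
  refine Finset.sum_congr rfl fun z _ => ?_
  rw [← addChar_sum, ← one_add_mul, one_add_signChar, ite_mul, zero_mul, mul_ite, mul_zero]

lemma two_mul_sum_evenCode_prod {R : Type*} [CommRing R] (u : ι → ZMod 2 → R) :
    2 * ∑ z ∈ evenCode ι, ∏ i, u i (z i) = ∏ i, (u i 0 + u i 1) + ∏ i, (u i 0 - u i 1) := by
  have sum_prod_eq (w : ι → ZMod 2 → R) : ∑ z : ι → ZMod 2, ∏ i, w i (z i)
      = ∏ i, (w i 0 + w i 1) := by
    rw [← Fintype.prod_sum]
    exact Finset.prod_congr rfl fun i _ => Fin.sum_univ_two (w i)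
  simp only [two_mul_sum_evenCode, ← Finset.prod_mul_distrib]
  rw [sum_prod_eq u, sum_prod_eq fun i s => signChar R s * u i s]
  simp only [AddChar.map_zero_eq_one, signChar_one, one_mul, neg_one_mul, ← sub_eq_add_neg]

lemma sum_evenCode_prod {K : Type*} [Field K] [NeZero (2 : K)] (u : ZMod 2 → K) :
    ∑ z ∈ evenCode ι, ∏ i, u (z i)
      = ((u 0 + u 1) ^ Fintype.card ι + (u 0 - u 1) ^ Fintype.card ι) / 2 := by
  rw [eq_div_iff two_ne_zero, mul_comm, two_mul_sum_evenCode_prod fun _ => u]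
  simp only [Finset.prod_const, Finset.card_univ]

end EvenCode

section LetterWeight

/-- The contribution of a single letter to the monomial of a word in a weight enumerator: `x` for
the letter `0` and `y` for every other one. -/
def letterWeight {α M : Type*} [Zero α] [DecidableEq α] (x y : M) (a : α) : M :=
  if a = 0 then x else y

lemma prod_letterWeight {ι α M : Type*} [Fintype ι] [Zero α] [DecidableEq α] [CommMonoid M]
    (x y : M) (v : ι → α) :
    ∏ i, letterWeight x y (v i)
      = x ^ (Fintype.card ι - hammingNorm v) * y ^ hammingNorm v := by
  have card_zeros : (Finset.univ.filter fun i => v i = 0).card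
      = Fintype.card ι - hammingNorm v :=
    Nat.eq_sub_of_add_eq (Finset.card_filter_add_card_filter_not _)
  simp only [letterWeight, Finset.prod_ite, Finset.prod_const, card_zeros, hammingNorm]

lemma enum2_eq_sum_prod_letterWeight {m n : ℕ} (T : Finset (Fin m × Fin n → ZMod 2 × ZMod 2))
    (x y : ℝ) : enum2 T x y = ∑ v ∈ T, ∏ p, letterWeight x y (v p) := by
  simp only [prod_letterWeight, Fintype.card_prod, Fintype.card_fin]
  rfl

variable {κ K : Type*} [Fintype κ] [DecidableEq κ] [Field K] [NeZero (2 : K)]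

lemma sum_evenCode_prod_letterWeight_zero (x y : K) :
    ∑ a ∈ evenCode κ, ∏ j, letterWeight x y (a j, (0 : ZMod 2))
      = ((x + y) ^ Fintype.card κ + (x - y) ^ Fintype.card κ) / 2 := by
  rw [sum_evenCode_prod fun s => letterWeight x y (s, (0 : ZMod 2))]
  simp [letterWeight]

lemma sum_evenCode_prod_letterWeight_one [Nonempty κ] (x y : K) :
    ∑ a ∈ evenCode κ, ∏ j, letterWeight x y (a j, (1 : ZMod 2))
      = 2 ^ (Fintype.card κ - 1) * y ^ Fintype.card κ := by
  have weight_eq (s : ZMod 2) : letterWeight x y (s, (1 : ZMod 2)) = y := by simp [letterWeight]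
  rw [sum_evenCode_prod fun s => letterWeight x y (s, (1 : ZMod 2)), weight_eq, weight_eq,
    sub_self, zero_pow Fintype.card_ne_zero, add_zero, ← two_mul, mul_pow, mul_div_right_comm,
    ← pow_sub_one_mul Fintype.card_ne_zero (2 : K), mul_div_cancel_right₀ _ two_ne_zero]

end LetterWeight

section BlockPauli

variable {ι κ : Type*}

/-- The Pauli string on positions `κ` of blocks `ι` that has `X`-part `b.1 i` on block `i` and
constant `Z`-part `b.2 i` there. -/
def blockPauli (b : (ι → κ → ZMod 2) × (ι → ZMod 2)) : ι × κ → ZMod 2 × ZMod 2 :=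
  fun p => (b.1 p.1 p.2, b.2 p.1)

lemma blockPauli_injective [Nonempty κ] : Function.Injective (blockPauli (ι := ι) (κ := κ)) := by
  intro b c h
  obtain ⟨j₀⟩ := ‹Nonempty κ›
  refine Prod.ext (funext₂ fun i j => ?_) (funext fun i => ?_)
  · exact congrArg Prod.fst (congrFun h (i, j))
  · exact congrArg Prod.snd (congrFun h (i, j₀))

lemma concatStab_eq_image_blockPauli (m n : ℕ) :
    concatStab m n
      = ((Fintype.piFinset fun _ : Fin m => evenCode (Fin n)) ×ˢ evenCode (Fin m)).image
          blockPauli := by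
  ext v
  simp only [concatStab, Finset.mem_filter, Finset.mem_univ, true_and, Finset.mem_image,
    Finset.mem_product, Fintype.mem_piFinset, mem_evenCode]
  constructor
  · rintro ⟨x_even, ζ, z_eq, ζ_even⟩
    exact ⟨(fun i j => (v (i, j)).1, ζ), ⟨x_even, ζ_even⟩,
      funext fun p => Prod.ext rfl (z_eq p.1 p.2).symm⟩
  · rintro ⟨b, ⟨x_even, ζ_even⟩, rfl⟩
    exact ⟨x_even, b.2, fun _ _ => rfl, ζ_even⟩

lemma sum_concatStab_prod {R : Type*} [CommSemiring R] (m n : ℕ) [NeZero n]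
    (w : ZMod 2 × ZMod 2 → R) :
    ∑ v ∈ concatStab m n, ∏ p, w (v p)
      = ∑ ζ ∈ evenCode (Fin m), ∏ i, ∑ a ∈ evenCode (Fin n), ∏ j, w (a j, ζ i) := by
  rw [concatStab_eq_image_blockPauli, Finset.sum_image blockPauli_injective.injOn,
    Finset.sum_product_right]
  refine Finset.sum_congr rfl fun ζ _ => ?_
  rw [Finset.prod_univ_sum]
  exact Finset.sum_congr rfl fun a _ => Fintype.prod_prod_type _

end BlockPauli

theorem weight_enumerator_concatStab (m n : ℕ) (hm : 1 ≤ m) (hn : 1 ≤ n) (x y : ℝ) :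
    enum2 (concatStab m n) x y
      = (1 / 2) *
        ((((x + y) ^ n + (x - y) ^ n) / 2 + 2 ^ (n - 1) * y ^ n) ^ m
          + (((x + y) ^ n + (x - y) ^ n) / 2 - 2 ^ (n - 1) * y ^ n) ^ m) := by
  have : NeZero n := ⟨Nat.one_le_iff_ne_zero.mp hn⟩
  rw [enum2_eq_sum_prod_letterWeight, sum_concatStab_prod,
    sum_evenCode_prod fun s => ∑ a ∈ evenCode (Fin n), ∏ j, letterWeight x y (a j, s),
    sum_evenCode_prod_letterWeight_zero, sum_evenCode_prod_letterWeight_one,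
    Fintype.card_fin, Fintype.card_fin, div_eq_inv_mul, one_div]
end

section
/- Let m, n ≥ 1, let b : Fin m → ZMod 2 and k : Fin m → ℕ with k i ≤ n for all i, and let Z̄ be the logical-Z representative of the n×m concatenated bit- and phase-flip repetition code. The weight enumerator of the stabilizer coset (M(b,k) + Z̄) + S equals F^o_m(u, w) for all real x, y, where u i = h^{b i}_{k i, n}(x,y) and w i = h^{b i}_{n − k i, n}(x,y). -/
/-- `M(b,k)`: block `i` has X-part `b i` at position 0 (and 0 elsewhere) and Z-part 1 at
positions `j < k i` (and 0 elsewhere). -/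
def Mbk (m n : ℕ) (b : Fin m → ZMod 2) (k : Fin m → ℕ) :
    Fin m × Fin n → ZMod 2 × ZMod 2 :=
  fun p => (if (p.2 : ℕ) = 0 then b p.1 else 0, if (p.2 : ℕ) < k p.1 then 1 else 0)

/-- The logical-Z representative: Z-part 1 at every position of block 0. -/
def ZbarC (m n : ℕ) : Fin m × Fin n → ZMod 2 × ZMod 2 :=
  fun p => (0, if (p.1 : ℕ) = 0 then 1 else 0)

/-- The logical-X representative: X-part 1 at position 0 of every block. -/
def XbarC (m n : ℕ) : Fin m × Fin n → ZMod 2 × ZMod 2 :=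
  fun p => (if (p.2 : ℕ) = 0 then 1 else 0, 0)

/-- The logical-Y representative. -/
def YbarC (m n : ℕ) : Fin m × Fin n → ZMod 2 × ZMod 2 :=
  XbarC m n + ZbarC m n

noncomputable def fe (n : ℕ) (x y : ℝ) : ℝ := ((x + y) ^ n + (x - y) ^ n) / 2

noncomputable def fo (n : ℕ) (x y : ℝ) : ℝ := ((x + y) ^ n - (x - y) ^ n) / 2

noncomputable def g (k n : ℕ) (x y : ℝ) : ℝ := (1 / 2) * (x + y) ^ (n - k) * (2 * y) ^ k

/-- `h^b_{k,n}`. -/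
noncomputable def hpol (b : ZMod 2) (k n : ℕ) (x y : ℝ) : ℝ :=
  if k = 0 then (if b = 0 then fe n x y else fo n x y) else g k n x y

noncomputable def Fe (m : ℕ) (u w : Fin m → ℝ) : ℝ :=
  ((∏ i, (u i + w i)) + ∏ i, (u i - w i)) / 2

noncomputable def Fo (m : ℕ) (u w : Fin m → ℝ) : ℝ :=
  ((∏ i, (u i + w i)) - ∏ i, (u i - w i)) / 2

open Finset

lemma addChar_map_sum {ι A M : Type*} [AddCommMonoid A] [CommMonoid M] (ψ : AddChar A M)
    (s : Finset ι) (a : ι → A) : ψ (∑ j ∈ s, a j) = ∏ j ∈ s, ψ (a j) :=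
  map_prod ψ.toMonoidHom (fun j => Multiplicative.ofAdd (a j)) s

section ParityStrings

/-- The nontrivial additive character of `ZMod 2`, with values `±1` in `R`; averaging against it
detects the parity of a binary string. -/
def parityChar (R : Type*) [CommRing R] : AddChar (ZMod 2) R :=
  AddChar.zmodChar 2 neg_one_sq

/-- The binary strings indexed by `ι` whose entries sum to `c`: the even-weight strings for `c = 0`,
the odd-weight ones for `c = 1`. -/
def parityStrings (ι : Type*) [Fintype ι] [DecidableEq ι] (c : ZMod 2) : Finset (ι → ZMod 2) :=
  {a | ∑ j, a j = c}

variable {R : Type*} [CommRing R]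

@[simp]
lemma parityChar_one : parityChar R 1 = -1 :=
  (AddChar.zmodChar_apply neg_one_sq 1).trans (pow_one _)

lemma sum_zmod_two {M : Type*} [AddCommMonoid M] (f : ZMod 2 → M) : ∑ a, f a = f 0 + f 1 :=
  Fin.sum_univ_two f

lemma zmod_two_eq_zero_or_one (c : ZMod 2) : c = 0 ∨ c = 1 :=
  Fin.exists_fin_two.mp ⟨c, rfl⟩

lemma one_add_parityChar_mul (c d : ZMod 2) :
    1 + parityChar R c * parityChar R d = if d = c then 2 else 0 := by
  rcases zmod_two_eq_zero_or_one c with rfl | rfl <;>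
    rcases zmod_two_eq_zero_or_one d with rfl | rfl <;> simp [one_add_one_eq_two]

variable {ι : Type*} [Fintype ι] [DecidableEq ι]

lemma prod_add_eq_sum_prod (f : ι → ZMod 2 → R) :
    ∏ j, (f j 0 + f j 1) = ∑ a : ι → ZMod 2, ∏ j, f j (a j) := by
  simp only [← sum_zmod_two, Fintype.prod_sum]

lemma prod_sub_eq_sum_parityChar_mul_prod (f : ι → ZMod 2 → R) :
    ∏ j, (f j 0 - f j 1) = ∑ a : ι → ZMod 2, parityChar R (∑ j, a j) * ∏ j, f j (a j) := by
  simpa [addChar_map_sum, prod_mul_distrib, sub_eq_add_neg]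
    using prod_add_eq_sum_prod fun j a => parityChar R a * f j a

lemma two_mul_sum_parityStrings_prod (f : ι → ZMod 2 → R) (c : ZMod 2) :
    2 * ∑ a ∈ parityStrings ι c, ∏ j, f j (a j)
      = ∏ j, (f j 0 + f j 1) + parityChar R c * ∏ j, (f j 0 - f j 1) := by
  calc 2 * ∑ a ∈ parityStrings ι c, ∏ j, f j (a j)
      = ∑ a : ι → ZMod 2, (1 + parityChar R c * parityChar R (∑ j, a j)) * ∏ j, f j (a j) := by
        simp only [parityStrings, mul_sum, sum_filter, one_add_parityChar_mul, ite_mul, zero_mul,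
          mul_ite, mul_zero]
    _ = ∏ j, (f j 0 + f j 1) + parityChar R c * ∏ j, (f j 0 - f j 1) := by
        simp only [prod_add_eq_sum_prod, prod_sub_eq_sum_parityChar_mul_prod, mul_sum,
          ← sum_add_distrib, add_mul, one_mul, mul_assoc]

end ParityStrings

section BlockEnumerator

/-- The factor of a single site in a weight enumerator: `x` for the trivial symbol, `y` for any
other. -/
def qubitWeight {α M : Type*} [Zero α] [DecidableEq α] (x y : M) (a : α) : M :=
  if a = 0 then x else y

variable {ι : Type*} [Fintype ι]

lemma prod_qubitWeight {α M : Type*} [Zero α] [DecidableEq α] [CommMonoid M] (x y : M)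
    (v : ι → α) :
    ∏ i, qubitWeight x y (v i) = x ^ (Fintype.card ι - hammingNorm v) * y ^ hammingNorm v := by
  classical
  have zeros : #{i | v i = 0} = Fintype.card ι - hammingNorm v := by
    simp only [hammingNorm, ← card_compl, compl_filter, not_not]
  simp only [qubitWeight, prod_ite, prod_const, zeros, hammingNorm]

lemma hammingNorm_add_one (z : ι → ZMod 2) :
    hammingNorm (fun j => z j + 1) = Fintype.card ι - hammingNorm z := by
  classical
  have add_one_ne_zero_iff (c : ZMod 2) : c + 1 ≠ 0 ↔ ¬ c ≠ 0 := by decide +revert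
  simp only [hammingNorm, add_one_ne_zero_iff, ← compl_filter, card_compl]

variable {R : Type*} [CommRing R]

lemma qubitWeight_add_qubitWeight (x y : R) (p : ZMod 2 × ZMod 2) :
    qubitWeight x y (p + (0, 0)) + qubitWeight x y (p + (1, 0))
      = qubitWeight (x + y) (2 * y) p.2 := by
  obtain ⟨b, z⟩ := p
  rcases zmod_two_eq_zero_or_one b with rfl | rfl <;>
    by_cases hz : z = 0 <;>
    simp [qubitWeight, hz, two_mul, add_comm, CharTwo.add_self_eq_zero]

lemma qubitWeight_sub_qubitWeight (x y : R) (p : ZMod 2 × ZMod 2) :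
    qubitWeight x y (p + (0, 0)) - qubitWeight x y (p + (1, 0))
      = parityChar R p.1 * qubitWeight (x - y) 0 p.2 := by
  obtain ⟨b, z⟩ := p
  rcases zmod_two_eq_zero_or_one b with rfl | rfl <;>
    by_cases hz : z = 0 <;>
    simp [qubitWeight, hz, CharTwo.add_self_eq_zero]

lemma two_mul_hpol (b : ZMod 2) (k n : ℕ) (x y : ℝ) :
    2 * hpol b k n x y
      = (x + y) ^ (n - k) * (2 * y) ^ k + parityChar ℝ b * ((x - y) ^ (n - k) * 0 ^ k) := by
  rcases eq_or_ne k 0 with rfl | hk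
  · rcases zmod_two_eq_zero_or_one b with rfl | rfl <;>
      simp only [hpol, fe, fo, if_true, if_false, one_ne_zero, AddChar.map_zero_eq_one,
        parityChar_one, tsub_zero, pow_zero] <;>
      ring
  · simp only [hpol, g, if_neg hk, zero_pow hk]
    ring

lemma sum_even_prod_qubitWeight [DecidableEq ι] (t : ι → ZMod 2 × ZMod 2) (x y : ℝ) :
    ∑ a ∈ parityStrings ι 0, ∏ j, qubitWeight x y (t j + (a j, 0))
      = hpol (∑ j, (t j).1) (hammingNorm fun j => (t j).2) (Fintype.card ι) x y := by
  refine mul_left_cancel₀ (two_ne_zero (α := ℝ)) ?_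
  rw [two_mul_sum_parityStrings_prod fun j a => qubitWeight x y (t j + (a, 0)), two_mul_hpol]
  simp only [qubitWeight_add_qubitWeight, qubitWeight_sub_qubitWeight, prod_mul_distrib,
    prod_qubitWeight, ← addChar_map_sum, AddChar.map_zero_eq_one, one_mul]

lemma sum_even_prod_qubitWeight_add [DecidableEq ι] (t : ι → ZMod 2 × ZMod 2) (c : ZMod 2)
    (x y : ℝ) :
    ∑ a ∈ parityStrings ι 0, ∏ j, qubitWeight x y (t j + (a j, c))
      = if c = 0 then
          hpol (∑ j, (t j).1) (hammingNorm fun j => (t j).2) (Fintype.card ι) x y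
        else
          hpol (∑ j, (t j).1) (Fintype.card ι - hammingNorm fun j => (t j).2)
            (Fintype.card ι) x y := by
  rcases zmod_two_eq_zero_or_one c with rfl | rfl
  · rw [if_pos rfl, sum_even_prod_qubitWeight]
  · have shifted := sum_even_prod_qubitWeight (fun j => t j + (0, 1)) x y
    simp only [add_assoc, Prod.mk_add_mk, zero_add, add_zero, Prod.fst_add, Prod.snd_add,
      hammingNorm_add_one] at shifted
    rw [if_neg one_ne_zero, shifted]

end BlockEnumerator

section CosetEnumerator

variable {m n : ℕ}

lemma sum_concatStab [NeZero n] {M : Type*} [AddCommMonoid M]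
    (F : (Fin m × Fin n → ZMod 2 × ZMod 2) → M) :
    ∑ s ∈ concatStab m n, F s
      = ∑ ζ ∈ parityStrings (Fin m) 0,
          ∑ a ∈ Fintype.piFinset fun _ : Fin m => parityStrings (Fin n) 0,
            F fun p => (a p.1 p.2, ζ p.1) := by
  -- The Z-value of a block is read off at its position `0`.
  have rebuild {s : Fin m × Fin n → ZMod 2 × ZMod 2} (hs : s ∈ concatStab m n) :
      (fun p : Fin m × Fin n => ((s (p.1, p.2)).1, (s (p.1, 0)).2)) = s := by
    obtain ⟨-, ζ, hZ, -⟩ := (mem_filter.mp hs).2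
    funext ⟨i, j⟩
    ext1 <;> simp only [hZ]
  rw [← sum_product']
  refine sum_nbij' (fun s => (fun i => (s (i, 0)).2, fun i j => (s (i, j)).1))
    (fun q p => (q.2 p.1 p.2, q.1 p.1)) ?_ ?_ (fun _ hs => rebuild hs) (fun _ _ => rfl)
    (fun _ hs => congrArg F (rebuild hs).symm)
  all_goals simp only [concatStab, parityStrings, mem_product, Fintype.mem_piFinset, mem_filter,
    mem_univ, true_and]
  · rintro s ⟨hX, ζ, hZ, hζ⟩
    simpa only [hZ] using ⟨hζ, hX⟩
  · rintro ⟨ζ, a⟩ ⟨hζ, ha⟩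
    exact ⟨ha, ζ, fun _ _ => rfl, hζ⟩

lemma enum2_eq_sum_prod (T : Finset (Fin m × Fin n → ZMod 2 × ZMod 2)) (x y : ℝ) :
    enum2 T x y = ∑ v ∈ T, ∏ i, ∏ j, qubitWeight x y (v (i, j)) := by
  refine sum_congr rfl fun v _ => ?_
  have monomial := prod_qubitWeight x y v
  rw [Fintype.card_prod, Fintype.card_fin, Fintype.card_fin, Fintype.prod_prod_type] at monomial
  exact monomial.symm

lemma sum_even_prod_ite_eq_Fe (u w : Fin m → ℝ) :
    ∑ ζ ∈ parityStrings (Fin m) 0, ∏ i, (if ζ i = 0 then u i else w i) = Fe m u w := by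
  have twice_sum := two_mul_sum_parityStrings_prod (fun i c => if c = 0 then u i else w i) 0
  simp only [if_true, one_ne_zero, if_false, AddChar.map_zero_eq_one, one_mul] at twice_sum
  rw [Fe, ← twice_sum, mul_div_cancel_left₀ _ two_ne_zero]

lemma enum2_image_add_concatStab [NeZero n] (t : Fin m × Fin n → ZMod 2 × ZMod 2) (x y : ℝ) :
    enum2 ((concatStab m n).image fun s => t + s) x y
      = Fe m
          (fun i => hpol (∑ j, (t (i, j)).1) (hammingNorm fun j => (t (i, j)).2) n x y)
          (fun i => hpol (∑ j, (t (i, j)).1) (n - hammingNorm fun j => (t (i, j)).2) n x y) := by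
  rw [enum2_eq_sum_prod, sum_image (add_right_injective t).injOn, sum_concatStab,
    ← sum_even_prod_ite_eq_Fe]
  refine sum_congr rfl fun ζ _ => ?_
  simp only [Pi.add_apply]
  rw [sum_prod_piFinset _ fun i (a : Fin n → ZMod 2) =>
    ∏ j, qubitWeight x y (t (i, j) + (a j, ζ i))]
  simp only [sum_even_prod_qubitWeight_add, Fintype.card_fin]

end CosetEnumerator

section LogicalZ

variable {m n : ℕ}

lemma Fe_swap_eq_Fo (i₀ : Fin m) (u w : Fin m → ℝ) :
    Fe m (fun i => if i = i₀ then w i else u i) (fun i => if i = i₀ then u i else w i)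
      = Fo m u w := by
  have add (i : Fin m) :
      (if i = i₀ then w i else u i) + (if i = i₀ then u i else w i) = u i + w i := by
    split_ifs <;> ring
  have sub (i : Fin m) :
      (if i = i₀ then w i else u i) - (if i = i₀ then u i else w i)
        = (if i = i₀ then -1 else 1) * (u i - w i) := by
    split_ifs <;> ring
  simp only [Fe, Fo, add, sub, prod_mul_distrib, prod_ite_eq', mem_univ, if_true]
  ring

lemma sum_add_ZbarC_fst (t : Fin m × Fin n → ZMod 2 × ZMod 2) (i : Fin m) :
    ∑ j, ((t + ZbarC m n) (i, j)).1 = ∑ j, (t (i, j)).1 := by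
  simp [ZbarC]

lemma hammingNorm_add_ZbarC_snd [NeZero m] (t : Fin m × Fin n → ZMod 2 × ZMod 2) (i : Fin m) :
    hammingNorm (fun j => ((t + ZbarC m n) (i, j)).2)
      = if i = 0 then n - hammingNorm fun j => (t (i, j)).2
        else hammingNorm fun j => (t (i, j)).2 := by
  rcases eq_or_ne i 0 with rfl | hi
  · simp [ZbarC, hammingNorm_add_one]
  · simp [ZbarC, hi]

theorem weight_enumerator_concat_coset_Zbar_general (hm : 1 ≤ m) (hn : 1 ≤ n)
    (t : Fin m × Fin n → ZMod 2 × ZMod 2) (x y : ℝ) :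
    enum2 ((concatStab m n).image fun s => (t + ZbarC m n) + s) x y
      = Fo m
          (fun i => hpol (∑ j, (t (i, j)).1) (hammingNorm fun j => (t (i, j)).2) n x y)
          (fun i => hpol (∑ j, (t (i, j)).1) (n - hammingNorm fun j => (t (i, j)).2) n x y) := by
  have : NeZero m := .of_pos hm
  have : NeZero n := .of_pos hn
  have sub_sub_norm (i : Fin m) :
      n - (n - hammingNorm fun j => (t (i, j)).2) = hammingNorm fun j => (t (i, j)).2 :=
    Nat.sub_sub_self (hammingNorm_le_card_fintype.trans_eq (Fintype.card_fin n))
  rw [enum2_image_add_concatStab, ← Fe_swap_eq_Fo 0]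
  simp only [sum_add_ZbarC_fst, hammingNorm_add_ZbarC_snd]
  congr 1 with i <;> split_ifs <;> simp only [sub_sub_norm]

lemma sum_Mbk_fst [NeZero n] (b : Fin m → ZMod 2) (k : Fin m → ℕ) (i : Fin m) :
    ∑ j, (Mbk m n b k (i, j)).1 = b i := by
  simp [Mbk]

lemma hammingNorm_Mbk_snd (b : Fin m → ZMod 2) {k : Fin m → ℕ} {i : Fin m} (hk : k i ≤ n) :
    hammingNorm (fun j => (Mbk m n b k (i, j)).2) = k i := by
  simp [Mbk, hammingNorm, Fin.card_filter_val_lt, hk]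

end LogicalZ

theorem weight_enumerator_concat_coset_Zbar (m n : ℕ) (hm : 1 ≤ m) (hn : 1 ≤ n)
    (b : Fin m → ZMod 2) (k : Fin m → ℕ) (hk : ∀ i, k i ≤ n) (x y : ℝ) :
    enum2 ((concatStab m n).image fun s => (Mbk m n b k + ZbarC m n) + s) x y
      = Fo m (fun i => hpol (b i) (k i) n x y) (fun i => hpol (b i) (n - k i) n x y) := by
  have : NeZero n := .of_pos hn
  simp only [weight_enumerator_concat_coset_Zbar_general hm hn, sum_Mbk_fst,
    hammingNorm_Mbk_snd, hk]
end
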